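/- Let p_1 < p_2 < p_3 < ... denote the sequence of all prime numbers and let k ≥ 0 be an integer. Then the limit as N → ∞ of (∑_{i=1}^N p_i^k · φ(p_i − 1)) / (∑_{i=1}^N p_i^k · (p_i − 1)) exists and equals Artin's constant A = ∏_p (1 − 1/(p(p−1))). -/

import Mathlib

open Filter

/-- Artin's constant `A = ∏_p (1 - 1/(p(p-1)))`, product over all primes. -/
noncomputable def artinConstant : ℝ :=
  ∏' p : Nat.Primes, (1 - 1 / (((p : ℕ) : ℝ) * (((p : ℕ) : ℝ) - 1)))

/-!
Since `φ(m) / m = ∑_{d ∣ m} μ(d) / d`, the sum of `log p * φ(p - 1) / (p - 1)` over the primes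
`p ≤ n` is `∑_d μ(d) / d * θ(n; d, 1)`, with `θ(n; d, 1)` the Chebyshev function of the primes
congruent to `1` modulo `d`. The prime number theorem in progressions gives
`θ(n; d, 1) / n → 1 / φ(d)`, and counting the prime factors `≡ 1 (mod d)` of a product over the
progression `1 + d j` gives `θ(n; d, 1) ≪ n (1 + log d) / d`. By dominated convergence over `d` the
`log p`-weighted average of `φ(p - 1) / (p - 1)` tends to `∑_d μ(d) / (d φ(d))`, whose Euler product
is Artin's constant. Partial summation then replaces the weight `log p` by `p ^ k * (p - 1)`.

The prime number theorem in progressions follows from the Wiener–Ikehara theorem and the regularity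
of Dirichlet L-functions on `re s = 1`. Smoothing by a positive kernel with compactly supported
Fourier transform brings in only a bounded piece of the boundary values of the Laplace transform, to
which the Riemann–Lebesgue lemma applies; slow decrease then undoes the smoothing.
-/

section BoundaryValues

open MeasureTheory Set Filter Topology FourierTransform Complex

lemma fourier_fourierChar_smul {E : Type*} [NormedAddCommGroup E] [NormedSpace ℂ E]
    (w : ℝ → E) (y u : ℝ) :
    𝓕 (fun ξ => Real.fourierChar (ξ * y) • w ξ) u = 𝓕 w (u - y) := by
  simp_rw [Real.fourier_real_eq, smul_smul, ← AddChar.map_add_eq_mul]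
  congr! 4
  ring

lemma fourier_indicator_mul_exp (h : ℝ → ℂ) (δ ξ : ℝ) :
    𝓕 ((Ioi 0).indicator fun u => h u * exp (-δ * u)) ξ =
      ∫ u in Ioi (0 : ℝ), h u * exp (-(δ + 2 * Real.pi * ξ * I) * u) := by
  rw [Real.fourier_real_eq_integral_exp_smul, ← integral_indicator measurableSet_Ioi]
  congr 1 with u
  by_cases hu : u ∈ Ioi 0
  · rw [indicator_of_mem hu, indicator_of_mem hu, smul_eq_mul, mul_left_comm, ← exp_add]
    push_cast
    ring_nf
  · simp [indicator_of_notMem hu]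

variable {h : ℝ → ℂ} {G : ℂ → ℂ} {w : ℝ → ℂ} {B : ℝ}

lemma integrable_indicator_mul_exp (hm : AEStronglyMeasurable h) (hB : ∀ u, ‖h u‖ ≤ B) {δ : ℝ}
    (hδ : 0 < δ) : Integrable ((Ioi 0).indicator fun u : ℝ => h u * exp (-δ * u)) := by
  rw [integrable_indicator_iff measurableSet_Ioi]
  have hexp : IntegrableOn (fun u : ℝ => exp (-δ * u)) (Ioi 0) := by
    exact_mod_cast (exp_neg_integrableOn_Ioi 0 hδ).ofReal (𝕜 := ℂ)
  exact hexp.bdd_mul hm.restrict (ae_of_all _ hB)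

lemma integral_mul_exp_mul_fourier (hm : AEStronglyMeasurable h) (hB : ∀ u, ‖h u‖ ≤ B)
    (hw : Integrable w) {δ : ℝ} (hδ : 0 < δ) (y : ℝ) :
    ∫ u in Ioi (0 : ℝ), h u * exp (-δ * u) * 𝓕 w (u - y) =
      ∫ ξ : ℝ, Real.fourierChar (ξ * y) •
        (w ξ * ∫ u in Ioi (0 : ℝ), h u * exp (-(δ + 2 * Real.pi * ξ * I) * u)) := by
  have hwy : Integrable fun ξ : ℝ => Real.fourierChar (ξ * y) • w ξ := by
    simpa [mul_comm] using (Real.fourierIntegral_convergent_iff (-y)).2 hw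
  have hflip := VectorFourier.integral_fourierIntegral_smul_eq_flip (L := innerₗ ℝ)
    Real.continuous_fourierChar continuous_inner (integrable_indicator_mul_exp hm hB hδ) hwy
  rw [flip_innerₗ] at hflip
  calc ∫ u in Ioi (0 : ℝ), h u * exp (-δ * u) * 𝓕 w (u - y)
      = ∫ u, (Ioi 0).indicator (fun u : ℝ => h u * exp (-δ * u)) u •
          𝓕 (fun ξ => Real.fourierChar (ξ * y) • w ξ) u := by
        simp_rw [fourier_fourierChar_smul, ← indicator_smul_left,
          integral_indicator measurableSet_Ioi, smul_eq_mul]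
    _ = ∫ ξ, 𝓕 ((Ioi 0).indicator fun u : ℝ => h u * exp (-δ * u)) ξ •
          Real.fourierChar (ξ * y) • w ξ := hflip.symm
    _ = _ := by
        simp_rw [fourier_indicator_mul_exp, smul_comm _ (Real.fourierChar _), smul_eq_mul,
          mul_comm]

lemma tendsto_integral_mul_exp_mul_fourier (hm : AEStronglyMeasurable h) (hB : ∀ u, ‖h u‖ ≤ B)
    (hw' : Integrable (𝓕 w)) (y : ℝ) :
    Tendsto (fun δ : ℝ => ∫ u in Ioi (0 : ℝ), h u * exp (-δ * u) * 𝓕 w (u - y)) (𝓝[>] 0)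
      (𝓝 (∫ u in Ioi (0 : ℝ), h u * 𝓕 w (u - y))) := by
  have hshift : Integrable fun u => 𝓕 w (u - y) := hw'.comp_sub_right y
  apply tendsto_integral_filter_of_dominated_convergence (fun u => B * ‖𝓕 w (u - y)‖)
  · exact .of_forall fun δ => ((hm.mul (by fun_prop)).mul hshift.1).restrict
  · filter_upwards [self_mem_nhdsWithin] with δ hδ
    filter_upwards [ae_restrict_mem measurableSet_Ioi] with u hu
    have hexp : ‖exp (-δ * u)‖ ≤ 1 := by
      rw [norm_exp]
      simpa using (mul_pos hδ hu).le
    rw [norm_mul, norm_mul]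
    gcongr
    simpa using mul_le_mul (hB u) hexp (norm_nonneg _) ((norm_nonneg _).trans (hB u))
  · exact (hshift.norm.const_mul B).integrableOn
  · refine ae_of_all _ fun u => tendsto_nhdsWithin_of_tendsto_nhds ?_
    exact Continuous.tendsto' (by fun_prop) _ _ (by simp)

lemma tendsto_integral_fourierChar_smul_mul (hG : ContinuousOn G {s | 0 ≤ s.re})
    (hwc : Continuous w) (hws : HasCompactSupport w) (y : ℝ) :
    Tendsto (fun δ : ℝ => ∫ ξ : ℝ, Real.fourierChar (ξ * y) •
        (w ξ * G (δ + 2 * Real.pi * ξ * I))) (𝓝[>] 0)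
      (𝓝 (∫ ξ : ℝ, Real.fourierChar (ξ * y) • (w ξ * G (2 * Real.pi * ξ * I)))) := by
  have hcont : ContinuousOn (fun z : ℝ × ℝ => G (z.1 + 2 * Real.pi * z.2 * I))
      {z | 0 ≤ z.1} :=
    hG.comp (by fun_prop) fun z (hz : 0 ≤ z.1) => by simpa using hz
  have hslice {δ : ℝ} (hδ : 0 ≤ δ) : Continuous fun ξ : ℝ => G (δ + 2 * Real.pi * ξ * I) :=
    hcont.comp_continuous (f := fun ξ : ℝ => (δ, ξ)) (by fun_prop) fun _ => hδ
  obtain ⟨C, hC⟩ : ∃ C, ∀ z ∈ Icc (0 : ℝ) 1 ×ˢ tsupport w, ‖G (z.1 + 2 * Real.pi * z.2 * I)‖ ≤ C :=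
    (isCompact_Icc.prod hws).exists_bound_of_continuousOn (hcont.mono fun z hz => hz.1.1)
  apply tendsto_integral_filter_of_dominated_convergence (fun ξ => ‖w ξ‖ * C)
  · filter_upwards [self_mem_nhdsWithin] with δ hδ
    have hchar : Continuous fun ξ : ℝ => Real.fourierChar (ξ * y) :=
      Real.continuous_fourierChar.comp (by fun_prop)
    exact (hchar.smul (hwc.mul (hslice (le_of_lt hδ)))).aestronglyMeasurable
  · filter_upwards [Ioo_mem_nhdsGT zero_lt_one] with δ hδ
    refine ae_of_all _ fun ξ => ?_
    rw [Circle.norm_smul, norm_mul]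
    by_cases hξ : ξ ∈ tsupport w
    · gcongr
      exact hC (δ, ξ) ⟨⟨hδ.1.le, hδ.2.le⟩, hξ⟩
    · simp [image_eq_zero_of_notMem_tsupport hξ]
  · exact (hwc.integrable_of_hasCompactSupport hws).norm.mul_const C
  · refine ae_of_all _ fun ξ => Tendsto.const_smul (Tendsto.const_mul _ ?_) _
    have hlim : Tendsto (fun δ : ℝ => (δ, ξ)) (𝓝[>] 0) (𝓝[{z | 0 ≤ z.1}] (0, ξ)) :=
      tendsto_nhdsWithin_iff.2 ⟨tendsto_nhdsWithin_of_tendsto_nhds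
        (Continuous.tendsto (by fun_prop) 0), by
        filter_upwards [self_mem_nhdsWithin] with δ hδ using le_of_lt hδ⟩
    simpa [Function.comp_def] using (hcont (0, ξ) (le_refl (0 : ℝ))).tendsto.comp hlim

lemma integral_mul_fourier_eq (hm : AEStronglyMeasurable h) (hB : ∀ u, ‖h u‖ ≤ B)
    (hG : ContinuousOn G {s | 0 ≤ s.re})
    (hL : ∀ s : ℂ, 0 < s.re → ∫ u in Ioi (0 : ℝ), h u * exp (-s * u) = G s)
    (hwc : Continuous w) (hws : HasCompactSupport w) (hw' : Integrable (𝓕 w)) (y : ℝ) :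
    ∫ u in Ioi (0 : ℝ), h u * 𝓕 w (u - y) =
      ∫ ξ : ℝ, Real.fourierChar (ξ * y) • (w ξ * G (2 * Real.pi * ξ * I)) := by
  refine tendsto_nhds_unique (tendsto_integral_mul_exp_mul_fourier hm hB hw' y)
    ((tendsto_integral_fourierChar_smul_mul hG hwc hws y).congr' ?_)
  filter_upwards [self_mem_nhdsWithin] with δ (hδ : 0 < δ)
  rw [integral_mul_exp_mul_fourier hm hB (hwc.integrable_of_hasCompactSupport hws) hδ]
  congr! 3 with ξ
  rw [hL _ (by simpa using hδ)]

theorem tendsto_integral_mul_fourier_sub (hm : AEStronglyMeasurable h) (hB : ∀ u, ‖h u‖ ≤ B)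
    (hG : ContinuousOn G {s | 0 ≤ s.re})
    (hL : ∀ s : ℂ, 0 < s.re → ∫ u in Ioi (0 : ℝ), h u * exp (-s * u) = G s)
    (hwc : Continuous w) (hws : HasCompactSupport w) (hw' : Integrable (𝓕 w)) :
    Tendsto (fun y => ∫ u in Ioi (0 : ℝ), h u * 𝓕 w (u - y)) atTop (𝓝 0) := by
  simp_rw [integral_mul_fourier_eq hm hB hG hL hwc hws hw']
  have hneg : Tendsto (fun y : ℝ => -y) atTop (cocompact ℝ) :=
    tendsto_neg_atTop_atBot.mono_right atBot_le_cocompact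
  have hRL := Real.tendsto_integral_exp_smul_cocompact
    fun ξ : ℝ => w ξ * G (2 * Real.pi * ξ * I)
  simpa [Function.comp_def] using hRL.comp hneg

end BoundaryValues

section PositiveKernel

open MeasureTheory Set Filter Topology FourierTransform ComplexConjugate
open scoped Convolution ContDiff

lemma conj_fourier_of_even {f : ℝ → ℝ} (hf : ∀ v, f (-v) = f v) (ξ : ℝ) :
    conj (𝓕 (fun v => (f v : ℂ)) ξ) = 𝓕 (fun v => (f v : ℂ)) ξ := by
  rw [Real.fourier_real_eq_integral_exp_smul, ← integral_conj, ← integral_neg_eq_self]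
  congr with v
  simp [← Complex.exp_conj, hf, map_ofNat]

lemma fourier_convolution_self_of_even {f : ℝ → ℝ} (hf : ∀ v, f (-v) = f v) (hfi : Integrable f)
    (ξ : ℝ) :
    𝓕 ((fun v => (f v : ℂ)) ⋆[ContinuousLinearMap.mul ℂ ℂ] fun v => (f v : ℂ)) ξ =
      (‖𝓕 (fun v => (f v : ℂ)) ξ‖ ^ 2 : ℝ) := by
  have hfc : Integrable fun v => (f v : ℂ) := hfi.ofReal
  rw [Real.fourier_mul_convolution_eq hfc hfc]
  nth_rw 2 [← conj_fourier_of_even hf]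
  simp [Complex.mul_conj']

lemma fourier_comp_div (w : ℝ → ℂ) {l : ℝ} (hl : 0 < l) (u : ℝ) :
    𝓕 (fun ξ => w (ξ / l)) u = l * 𝓕 w (l * u) := by
  simp_rw [Real.fourier_real_eq]
  have hsub := Measure.integral_comp_div (fun v => Real.fourierChar (-(v * (l * u))) • w v) l
  rw [abs_of_pos hl, Complex.real_smul] at hsub
  rw [← hsub]
  congr! 5 with v
  field_simp

theorem exists_hasCompactSupport_fourier_nonneg :
    ∃ (w : ℝ → ℂ) (K : ℝ → ℝ), Continuous w ∧ HasCompactSupport w ∧ (∀ u, 𝓕 w u = K u) ∧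
      Integrable K ∧ (∀ u, 0 ≤ K u) ∧ 0 < ∫ u, K u := by
  let b : ContDiffBump (0 : ℝ) := default
  let f : ℝ → ℂ := fun v => (b v : ℂ)
  have hfs : HasCompactSupport f := b.hasCompactSupport.comp_left Complex.ofReal_zero
  have hfc : ContDiff ℝ ∞ f := Complex.ofRealCLM.contDiff.comp b.contDiff
  let g := 𝓕 (hfs.toSchwartzMap hfc)
  have hgf : ⇑g = 𝓕 f := SchwartzMap.fourier_coe _
  have hK : Integrable fun ξ => ‖𝓕 f ξ‖ ^ 2 := by
    simpa [hgf] using (memLp_two_iff_integrable_sq_norm g.continuous.aestronglyMeasurable).1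
      (g.memLp 2)
  have hKc : Continuous fun ξ => ‖𝓕 f ξ‖ ^ 2 := by
    rw [← hgf]
    fun_prop
  have hzero : 𝓕 f 0 ≠ 0 := by
    have : 𝓕 f 0 = (∫ v, b v : ℝ) := by
      rw [Real.fourier_real_eq, ← integral_complex_ofReal]
      simp [f]
    rw [this]
    exact_mod_cast (b.integral_pos (μ := volume)).ne'
  refine ⟨f ⋆[ContinuousLinearMap.mul ℂ ℂ] f, fun ξ => ‖𝓕 f ξ‖ ^ 2,
    hfs.continuous_convolution_left _ hfc.continuous
      (hfc.continuous.locallyIntegrable),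
    hfs.convolution _ hfs,
    fourier_convolution_self_of_even b.neg b.integrable, hK, fun _ => by positivity,
    integral_pos_of_integrable_nonneg_nonzero hKc hK (fun _ => by positivity) (x := 0)
      (by simpa using hzero)⟩

end PositiveKernel

section Tauberian

open MeasureTheory Set Filter Topology FourierTransform

/-- Slow decrease at infinity: over short steps to the right, `h` eventually drops by
arbitrarily little. This is the one-sided condition of Tauberian theorems. -/
def SlowlyDecreasing (h : ℝ → ℝ) : Prop :=
  ∀ ε > 0, ∃ η > 0, ∀ᶠ u in atTop, ∀ v ∈ Icc u (u + η), h u - ε ≤ h v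

lemma integral_comp_mul_sub (F : ℝ → ℝ) {l : ℝ} (hl : 0 < l) (y : ℝ) :
    ∫ u, F (l * (u - y)) = l⁻¹ * ∫ v, F v := by
  rw [integral_sub_right_eq_self fun u => F (l * u), Measure.integral_comp_mul_left,
    abs_of_pos (inv_pos.2 hl), smul_eq_mul]

variable {h K : ℝ → ℝ} {B : ℝ}

lemma le_integral_mul_kernel (hm : AEStronglyMeasurable h) (hB : ∀ u, |h u| ≤ B)
    (hK : Integrable K) (hK0 : ∀ v, 0 ≤ K v) {l η ε y : ℝ} (hl : 0 < l) (hy : η < y)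
    (hε : ∀ u ∈ Icc (y - η) (y + η), ε ≤ h u) :
    l⁻¹ * ((ε + B) * (∫ v in Icc (l * -η) (l * η), K v) - B * ∫ v, K v) ≤
      ∫ u in Ioi (0 : ℝ), h u * K (l * (u - y)) := by
  have hKl : Integrable fun u => K (l * (u - y)) :=
    (hK.comp_mul_left' hl.ne').comp_sub_right y
  let F : ℝ → ℝ := fun v => (ε + B) * (Icc (l * -η) (l * η)).indicator K v - B * K v
  have hF : Integrable F :=
    ((hK.indicator measurableSet_Icc).const_mul _).sub (hK.const_mul B)
  have hle (u : ℝ) :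
      F (l * (u - y)) ≤ (Ioi 0).indicator (fun u => h u * K (l * (u - y))) u := by
    have hlower := neg_le_of_abs_le (hB u)
    have hKu := hK0 (l * (u - y))
    by_cases hu : l * (u - y) ∈ Icc (l * -η) (l * η)
    · obtain ⟨h₁, h₂⟩ : -η ≤ u - y ∧ u - y ≤ η := by
        simpa only [mem_Icc, mul_le_mul_iff_right₀ hl] using hu
      have hεu := hε u ⟨by linarith, by linarith⟩
      rw [indicator_of_mem (mem_Ioi.2 (by linarith))]
      simp only [F, indicator_of_mem hu]
      nlinarith
    · simp only [F, indicator_of_notMem hu]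
      by_cases hu0 : u ∈ Ioi 0
      · rw [indicator_of_mem hu0]
        nlinarith
      · rw [indicator_of_notMem hu0]
        nlinarith [(abs_nonneg _).trans (hB u)]
  calc l⁻¹ * ((ε + B) * (∫ v in Icc (l * -η) (l * η), K v) - B * ∫ v, K v)
      = l⁻¹ * ∫ v, F v := by
        rw [integral_sub ((hK.indicator measurableSet_Icc).const_mul _) (hK.const_mul B),
          integral_const_mul, integral_const_mul, integral_indicator measurableSet_Icc]
    _ = ∫ u, F (l * (u - y)) := (integral_comp_mul_sub F hl y).symm
    _ ≤ ∫ u, (Ioi 0).indicator (fun u => h u * K (l * (u - y))) u :=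
        integral_mono ((hF.comp_mul_left' hl.ne').comp_sub_right y)
          ((hKl.bdd_mul hm (ae_of_all _ hB)).indicator measurableSet_Ioi) hle
    _ = _ := integral_indicator measurableSet_Ioi

/-- If `h` were at least `ε` on the whole window, then a kernel scaled sharply enough to have almost
all of its mass there could not give `h` a small average. -/
lemma eventually_exists_mem_Icc_lt (hm : AEStronglyMeasurable h) (hB : ∀ u, |h u| ≤ B)
    (hK : Integrable K) (hK0 : ∀ v, 0 ≤ K v) (hKpos : 0 < ∫ v, K v)
    (hlim : ∀ l > 0, Tendsto (fun y => ∫ u in Ioi (0 : ℝ), h u * K (l * (u - y))) atTop (𝓝 0))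
    {ε η : ℝ} (hε : 0 < ε) (hη : 0 < η) :
    ∀ᶠ y in atTop, ∃ u ∈ Icc (y - η) (y + η), h u < ε := by
  have hmass : Tendsto (fun l : ℝ => (ε + B) * (∫ v in Icc (l * -η) (l * η), K v) - B * ∫ v, K v)
      atTop (𝓝 ((ε + B) * (∫ v, K v) - B * ∫ v, K v)) :=
    ((((aecover_Icc (tendsto_id.atTop_mul_const_of_neg (neg_neg_of_pos hη))
      (tendsto_id.atTop_mul_const hη)).integral_tendsto_of_countably_generated hK).const_mul
        _).sub_const _)
  have hpos : 0 < (ε + B) * (∫ v, K v) - B * ∫ v, K v := by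
    linarith [mul_pos hε hKpos]
  obtain ⟨l, hlpos, hl⟩ :=
    ((hmass.eventually (lt_mem_nhds hpos)).and (eventually_gt_atTop 0)).exists
  filter_upwards [(hlim l hl).eventually (gt_mem_nhds (mul_pos (inv_pos.2 hl) hlpos)),
    eventually_gt_atTop η] with y hsmall hy
  by_contra! hge
  exact (le_integral_mul_kernel hm hB hK hK0 hl hy hge).not_gt hsmall

lemma SlowlyDecreasing.tendsto_zero (hs : SlowlyDecreasing h)
    (hupper : ∀ ε > 0, ∀ η > 0, ∀ᶠ y in atTop, ∃ u ∈ Icc (y - η) (y + η), h u < ε)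
    (hlower : ∀ ε > 0, ∀ η > 0, ∀ᶠ y in atTop, ∃ u ∈ Icc (y - η) (y + η), -ε < h u) :
    Tendsto h atTop (𝓝 0) := by
  refine Metric.tendsto_nhds.2 fun ε hε => ?_
  obtain ⟨η, hη, hdrop⟩ := hs (ε / 2) (half_pos hε)
  have hbelow := (tendsto_atTop_add_const_right atTop (-(η / 2)) tendsto_id).eventually
    (hlower (ε / 2) (half_pos hε) (η / 2) (half_pos hη))
  have hdropbelow := (tendsto_atTop_add_const_right atTop (-η) tendsto_id).eventually
    (eventually_forall_ge_atTop.2 hdrop)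
  have habove := (tendsto_atTop_add_const_right atTop (η / 2) tendsto_id).eventually
    (hupper (ε / 2) (half_pos hε) (η / 2) (half_pos hη))
  filter_upwards [hdrop, hbelow, hdropbelow, habove] with y hy ⟨v, hv, hhv⟩ hdropv ⟨u, hu, hhu⟩
  simp only [id_eq] at hv hdropv hu
  have hyu := hy u ⟨by linarith [hu.1], by linarith [hu.2]⟩
  have hvy := hdropv v (by linarith [hv.1]) y ⟨by linarith [hv.2], by linarith [hv.1]⟩
  rw [Real.dist_0_eq_abs, abs_lt]
  constructor <;> linarith

lemma tendsto_integral_mul_kernel_comp_mul {w : ℝ → ℂ} (hm : AEStronglyMeasurable h)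
    (hB : ∀ u, |h u| ≤ B) {G : ℂ → ℂ} (hG : ContinuousOn G {s | 0 ≤ s.re})
    (hL : ∀ s : ℂ, 0 < s.re → ∫ u in Ioi (0 : ℝ), h u * Complex.exp (-s * u) = G s)
    (hwc : Continuous w) (hws : HasCompactSupport w) (hwK : ∀ u, 𝓕 w u = K u)
    (hK : Integrable K) {l : ℝ} (hl : 0 < l) :
    Tendsto (fun y => ∫ u in Ioi (0 : ℝ), h u * K (l * (u - y))) atTop (𝓝 0) := by
  have hscale (u : ℝ) : 𝓕 (fun ξ => w (ξ / l)) u = (l * K (l * u) : ℝ) := by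
    rw [fourier_comp_div w hl, hwK, Complex.ofReal_mul]
  have hint : Integrable (𝓕 fun ξ => w (ξ / l)) := by
    rw [funext hscale]
    exact ((hK.comp_mul_left' hl.ne').const_mul l).ofReal
  have hsupp : HasCompactSupport fun ξ => w (ξ / l) := by
    simpa only [div_eq_mul_inv, Function.comp_def, Homeomorph.coe_mulRight₀] using
      hws.comp_homeomorph (Homeomorph.mulRight₀ l⁻¹ (inv_ne_zero hl.ne'))
  have hcomplex := tendsto_integral_mul_fourier_sub (h := fun u => (h u : ℂ))
    (Complex.continuous_ofReal.comp_aestronglyMeasurable hm) (by simpa using hB) hG hL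
    (by fun_prop) hsupp hint
  have hreal := ((Complex.continuous_re.tendsto' 0 0 rfl).comp hcomplex).const_mul l⁻¹
  rw [mul_zero] at hreal
  refine hreal.congr fun y => ?_
  simp only [hscale, Function.comp_apply, ← Complex.ofReal_mul, integral_complex_ofReal,
    Complex.ofReal_re, ← integral_const_mul]
  congr with u
  field_simp

theorem SlowlyDecreasing.tendsto_zero_of_laplace (hs : SlowlyDecreasing h)
    (hm : AEStronglyMeasurable h) (hB : ∀ u, |h u| ≤ B) {G : ℂ → ℂ}
    (hG : ContinuousOn G {s | 0 ≤ s.re})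
    (hL : ∀ s : ℂ, 0 < s.re → ∫ u in Ioi (0 : ℝ), h u * Complex.exp (-s * u) = G s) :
    Tendsto h atTop (𝓝 0) := by
  obtain ⟨w, K, hwc, hws, hwK, hK, hK0, hKpos⟩ := exists_hasCompactSupport_fourier_nonneg
  have hlim (l : ℝ) (hl : 0 < l) :
      Tendsto (fun y => ∫ u in Ioi (0 : ℝ), h u * K (l * (u - y))) atTop (𝓝 0) :=
    tendsto_integral_mul_kernel_comp_mul hm hB hG hL hwc hws hwK hK hl
  refine hs.tendsto_zero (fun ε hε η hη =>
    eventually_exists_mem_Icc_lt hm hB hK hK0 hKpos hlim hε hη) fun ε hε η hη => ?_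
  have hneg := eventually_exists_mem_Icc_lt (h := fun u => -h u) hm.neg (by simpa using hB)
    hK hK0 hKpos (fun l hl => by simpa [integral_neg] using (hlim l hl).neg) hε hη
  simpa only [neg_lt] using hneg

end Tauberian

section WienerIkehara

open MeasureTheory Set Filter Topology

lemma slowlyDecreasing_mul_exp_neg_sub {S : ℝ → ℝ} (hS : Monotone S) {B : ℝ}
    (hB : ∀ x > 0, S x ≤ B * x) (c : ℝ) :
    SlowlyDecreasing fun u => S (Real.exp u) * Real.exp (-u) - c := by
  intro ε hε
  have hB1 : 0 < |B| + 1 := by positivity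
  refine ⟨ε / (|B| + 1), by positivity, .of_forall fun u v ⟨huv, hvu⟩ => ?_⟩
  have hexp : Real.exp (-v) = Real.exp (-u) * Real.exp (-(v - u)) := by
    rw [← Real.exp_add]
    ring_nf
  have hSu : S (Real.exp u) * Real.exp (-u) ≤ |B| + 1 := by
    rw [Real.exp_neg, ← div_eq_mul_inv, div_le_iff₀ (Real.exp_pos u)]
    nlinarith [hB _ (Real.exp_pos u), Real.exp_pos u, le_abs_self B]
  have hloss : S (Real.exp u) * Real.exp (-u) * (1 - Real.exp (-(v - u))) ≤ ε := by
    calc _ ≤ (|B| + 1) * (v - u) :=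
          mul_le_mul hSu (by linarith [Real.add_one_le_exp (-(v - u))])
            (sub_nonneg.2 (Real.exp_le_one_iff.2 (by linarith))) hB1.le
      _ ≤ ε := by rw [← le_div_iff₀' hB1]; linarith
  have hmono : S (Real.exp u) * Real.exp (-v) ≤ S (Real.exp v) * Real.exp (-v) := by
    gcongr
    exact hS (Real.exp_le_exp.2 huv)
  simp only [hexp] at hmono ⊢
  linarith

variable {a : ℕ → ℝ} {B : ℝ}

lemma monotone_sum_Icc_floor (ha : ∀ n, 0 ≤ a n) :
    Monotone fun x : ℝ => ∑ k ∈ Finset.Icc 1 ⌊x⌋₊, a k := fun _ _ hxy =>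
  Finset.sum_le_sum_of_subset_of_nonneg
    (Finset.Icc_subset_Icc_right (Nat.floor_le_floor hxy)) fun k _ _ => ha k

lemma add_one_ne_zero_of_re_nonneg {s : ℂ} (hs : 0 ≤ s.re) : s + 1 ≠ 0 := fun h =>
  (neg_one_lt_zero.trans_le hs).ne' (by simp [eq_neg_of_add_eq_zero_left h])

lemma integral_sum_exp_mul_exp_eq_LSeries_div (ha : ∀ n, 0 ≤ a n)
    (hB : ∀ n : ℕ, ∑ k ∈ Finset.Icc 1 n, a k ≤ B * n) {s : ℂ} (hs : 0 < s.re) :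
    ∫ u in Ioi (0 : ℝ), ((∑ k ∈ Finset.Icc 1 ⌊Real.exp u⌋₊, a k) * Real.exp (-u) : ℝ) *
        Complex.exp (-s * u) = LSeries (fun n => a n) (s + 1) / (s + 1) := by
  have hne : s + 1 ≠ 0 := add_one_ne_zero_of_re_nonneg hs.le
  have hO : (fun n : ℕ => ∑ k ∈ Finset.Icc 1 n, a k) =O[atTop] fun n => (n : ℝ) ^ (1 : ℝ) := by
    refine Asymptotics.IsBigO.of_bound B (.of_forall fun n => ?_)
    rw [Real.norm_of_nonneg (Finset.sum_nonneg fun k _ => ha k)]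
    simpa using hB n
  have hsubst := integral_comp_exp_Ioi (fun t : ℝ =>
    (∑ k ∈ Finset.Icc 1 ⌊t⌋₊, (a k : ℂ)) * (t : ℂ) ^ (-(s + 1 + 1))) 0
  rw [Real.exp_zero] at hsubst
  rw [LSeries_eq_mul_integral_of_nonneg a (r := 1) zero_le_one (by simpa using hs) hO ha,
    mul_div_cancel_left₀ _ hne, ← hsubst]
  refine setIntegral_congr_fun measurableSet_Ioi fun u _ => ?_
  have hcpow : ((Real.exp u : ℝ) : ℂ) ^ (-(s + 1 + 1)) = Complex.exp (-(s + 1 + 1) * u) := by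
    rw [Complex.cpow_def_of_ne_zero (by exact_mod_cast (Real.exp_pos u).ne'),
      ← Complex.ofReal_log (Real.exp_pos u).le, Real.log_exp, mul_comm]
  have hexp : Complex.exp u * Complex.exp (-(s + 1 + 1) * u) =
      Complex.exp (-u) * Complex.exp (-s * u) := by
    rw [← Complex.exp_add, ← Complex.exp_add]
    ring_nf
  simp only [hcpow, Complex.real_smul]
  push_cast
  linear_combination (-∑ k ∈ Finset.Icc 1 ⌊Real.exp u⌋₊, (a k : ℂ)) * hexp

lemma sum_Icc_floor_le (ha : ∀ n, 0 ≤ a n) (hB : ∀ n : ℕ, ∑ k ∈ Finset.Icc 1 n, a k ≤ B * n)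
    {x : ℝ} (hx : 0 ≤ x) : ∑ k ∈ Finset.Icc 1 ⌊x⌋₊, a k ≤ B * x := by
  have hB0 : 0 ≤ B := (ha 1).trans (by simpa using hB 1)
  exact (hB _).trans (mul_le_mul_of_nonneg_left (Nat.floor_le hx) hB0)

lemma abs_sum_exp_mul_exp_neg_le (ha : ∀ n, 0 ≤ a n)
    (hB : ∀ n : ℕ, ∑ k ∈ Finset.Icc 1 n, a k ≤ B * n) (u : ℝ) :
    |(∑ k ∈ Finset.Icc 1 ⌊Real.exp u⌋₊, a k) * Real.exp (-u)| ≤ B := by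
  rw [abs_of_nonneg (mul_nonneg (Finset.sum_nonneg fun k _ => ha k) (Real.exp_pos _).le),
    Real.exp_neg, ← div_eq_mul_inv, div_le_iff₀ (Real.exp_pos u)]
  exact sum_Icc_floor_le ha hB (Real.exp_pos u).le

lemma measurable_sum_exp_mul_exp_neg (ha : ∀ n, 0 ≤ a n) :
    Measurable fun u => (∑ k ∈ Finset.Icc 1 ⌊Real.exp u⌋₊, a k) * Real.exp (-u) :=
  ((monotone_sum_Icc_floor ha).measurable.comp Real.measurable_exp).mul (by fun_prop)

variable {F : ℂ → ℂ} {c : ℝ}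

lemma integral_sum_exp_sub_mul_exp_eq (ha : ∀ n, 0 ≤ a n)
    (hB : ∀ n : ℕ, ∑ k ∈ Finset.Icc 1 n, a k ≤ B * n)
    (hF : EqOn F (fun s => LSeries (fun n => a n) s - c / (s - 1)) {s | 1 < s.re})
    {s : ℂ} (hs : 0 < s.re) :
    ∫ u in Ioi (0 : ℝ), (((∑ k ∈ Finset.Icc 1 ⌊Real.exp u⌋₊, a k) * Real.exp (-u) - c : ℝ) : ℂ) *
        Complex.exp (-s * u) = (F (s + 1) - c) / (s + 1) := by
  have hs0 : s ≠ 0 := by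
    rintro rfl
    simp at hs
  have hs1 : s + 1 ≠ 0 := add_one_ne_zero_of_re_nonneg hs.le
  have hexp : IntegrableOn (fun u : ℝ => Complex.exp (-s * u)) (Ioi 0) :=
    integrableOn_exp_mul_complex_Ioi (by simpa using hs) 0
  have hsum := hexp.bdd_mul
    (f := fun u => (((∑ k ∈ Finset.Icc 1 ⌊Real.exp u⌋₊, a k) * Real.exp (-u) : ℝ) : ℂ))
    (Complex.measurable_ofReal.comp (measurable_sum_exp_mul_exp_neg ha)).aestronglyMeasurable
    (ae_of_all _ fun u => by
      rw [Complex.norm_real]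
      exact abs_sum_exp_mul_exp_neg_le ha hB u)
  have hFs : F (s + 1) = LSeries (fun n => a n) (s + 1) - c / s := by
    rw [hF (show 1 < (s + 1).re by simpa using hs)]
    simp
  simp_rw [Complex.ofReal_sub, sub_mul]
  rw [integral_sub hsum (hexp.const_mul _), integral_sum_exp_mul_exp_eq_LSeries_div ha hB hs,
    integral_const_mul, integral_exp_mul_complex_Ioi (by simpa using hs) 0, hFs]
  simp only [Complex.ofReal_zero, mul_zero, Complex.exp_zero]
  field_simp
  ring

theorem wiener_ikehara (ha : ∀ n, 0 ≤ a n)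
    (hB : ∀ n : ℕ, ∑ k ∈ Finset.Icc 1 n, a k ≤ B * n) (hFc : ContinuousOn F {s | 1 ≤ s.re})
    (hF : EqOn F (fun s => LSeries (fun n => a n) s - c / (s - 1)) {s | 1 < s.re}) :
    Tendsto (fun n : ℕ => (∑ k ∈ Finset.Icc 1 n, a k) / n) atTop (𝓝 c) := by
  have hG : ContinuousOn (fun s => (F (s + 1) - c) / (s + 1)) {s | 0 ≤ s.re} := by
    refine ContinuousOn.div (.sub (hFc.comp (by fun_prop) fun s hs => ?_) continuousOn_const)
      (by fun_prop) fun s hs => add_one_ne_zero_of_re_nonneg hs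
    simpa using hs
  have hexp : Tendsto (fun u => (∑ k ∈ Finset.Icc 1 ⌊Real.exp u⌋₊, a k) * Real.exp (-u) - c)
      atTop (𝓝 0) :=
    (slowlyDecreasing_mul_exp_neg_sub (monotone_sum_Icc_floor ha)
        (fun x hx => sum_Icc_floor_le ha hB hx.le) c).tendsto_zero_of_laplace
      ((measurable_sum_exp_mul_exp_neg ha).sub_const c).aestronglyMeasurable
      (fun u => (abs_sub _ _).trans (add_le_add_left (abs_sum_exp_mul_exp_neg_le ha hB u) |c|))
      hG fun s hs => integral_sum_exp_sub_mul_exp_eq ha hB hF hs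
  have hlog := ((hexp.comp Real.tendsto_log_atTop).comp tendsto_natCast_atTop_atTop).add_const c
  rw [zero_add] at hlog
  refine hlog.congr' ?_
  filter_upwards [eventually_gt_atTop 0] with n hn
  have hn' : (0 : ℝ) < n := by exact_mod_cast hn
  simp [Real.exp_neg, Real.exp_log hn', div_eq_mul_inv]

end WienerIkehara

section PrimesInProgressions

open Set Filter Topology ArithmeticFunction ArithmeticFunction.vonMangoldt

/-- The Chebyshev function `θ(n; q, a)`, the sum of `log p` over the primes `p ≤ n` in the residue
class `a` modulo `q`. -/
noncomputable def thetaAP (q : ℕ) (a : ZMod q) (n : ℕ) : ℝ :=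
  ∑ p ∈ Nat.primesLE n with ((p : ℕ) : ZMod q) = a, Real.log p

theorem tendsto_sum_residueClass_div {q : ℕ} [NeZero q] {a : ZMod q} (ha : IsUnit a) :
    Tendsto (fun n : ℕ => (∑ k ∈ Finset.Icc 1 n, residueClass a k) / n) atTop
      (𝓝 (q.totient : ℝ)⁻¹) := by
  refine wiener_ikehara (B := Real.log 4 + 4) (residueClass_nonneg a) (fun n => ?_)
    (continuousOn_LFunctionResidueClassAux a) fun s hs => ?_
  · calc ∑ k ∈ Finset.Icc 1 n, residueClass a k ≤ ∑ k ∈ Finset.Icc 1 n, vonMangoldt k :=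
          Finset.sum_le_sum fun k _ => residueClass_le a k
      _ = Chebyshev.psi n := by simp [Chebyshev.psi, ← Finset.Icc_add_one_left_eq_Ioc]
      _ ≤ (Real.log 4 + 4) * n := Chebyshev.psi_le_const_mul_self n.cast_nonneg
  · rw [eqOn_LFunctionResidueClassAux ha hs]
    simp

lemma sum_residueClass_sub_thetaAP (q : ℕ) (a : ZMod q) (n : ℕ) :
    (∑ k ∈ Finset.Icc 1 n, residueClass a k) - thetaAP q a n =
      ∑ k ∈ Finset.Icc 1 n with ((k : ℕ) : ZMod q) = a,
        (vonMangoldt k - if k.Prime then Real.log k else 0) := by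
  rw [Finset.sum_sub_distrib, thetaAP, Nat.primesLE_eq_filter_Icc_one, Finset.filter_comm,
    Finset.sum_filter (p := Nat.Prime)]
  simp only [residueClass, indicator_apply, mem_ofPred_eq, Finset.sum_filter]

lemma psi_sub_theta_eq_sum (n : ℕ) :
    Chebyshev.psi n - Chebyshev.theta n =
      ∑ k ∈ Finset.Icc 1 n, (vonMangoldt k - if k.Prime then Real.log k else 0) := by
  rw [Finset.sum_sub_distrib, ← Finset.sum_filter, Chebyshev.theta_eq_sum_primesLE_log,
    Nat.primesLE_eq_filter_Icc_one, Chebyshev.psi, Nat.floor_natCast]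
  rfl

lemma tendsto_psi_sub_theta_div :
    Tendsto (fun n : ℕ => (Chebyshev.psi n - Chebyshev.theta n) / n) atTop (𝓝 0) := by
  obtain ⟨C, hC⟩ := Chebyshev.psi_sub_theta_le_mul_sqrt
  have hsqrt : Tendsto (fun n : ℕ => C / √(n : ℝ)) atTop (𝓝 0) :=
    (Real.tendsto_sqrt_atTop.comp tendsto_natCast_atTop_atTop).const_div_atTop C
  refine squeeze_zero (fun n => ?_) (fun n => ?_) hsqrt
  · exact div_nonneg (sub_nonneg.2 (Chebyshev.theta_le_psi n)) n.cast_nonneg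
  · rw [div_eq_mul_one_div C, ← Real.sqrt_div_self', ← mul_div_assoc]
    gcongr
    exact hC n

theorem tendsto_thetaAP_div {q : ℕ} [NeZero q] {a : ZMod q} (ha : IsUnit a) :
    Tendsto (fun n : ℕ => thetaAP q a n / n) atTop (𝓝 (q.totient : ℝ)⁻¹) := by
  have hnonneg (k : ℕ) : 0 ≤ vonMangoldt k - if k.Prime then Real.log k else 0 := by
    split_ifs with hk
    · rw [vonMangoldt_apply_prime hk, sub_self]
    · rw [sub_zero]
      exact vonMangoldt_nonneg
  have hpowers : Tendsto (fun n : ℕ =>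
      ((∑ k ∈ Finset.Icc 1 n, residueClass a k) - thetaAP q a n) / n) atTop (𝓝 0) := by
    refine squeeze_zero (fun n => ?_) (fun n => ?_) tendsto_psi_sub_theta_div
    · rw [sum_residueClass_sub_thetaAP]
      exact div_nonneg (Finset.sum_nonneg fun k _ => hnonneg k) n.cast_nonneg
    · rw [sum_residueClass_sub_thetaAP, psi_sub_theta_eq_sum]
      gcongr
      · exact fun k _ _ => hnonneg k
      · exact Finset.filter_subset _ _
  simpa [sub_div] using (tendsto_sum_residueClass_div ha).sub hpowers

lemma natCast_zmod_eq_one_iff_dvd_sub_one {q p : ℕ} (hp : 1 ≤ p) :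
    (p : ZMod q) = 1 ↔ q ∣ p - 1 := by
  rw [← Nat.cast_one, eq_comm, ZMod.natCast_eq_natCast_iff, Nat.modEq_iff_dvd' hp]

lemma dvd_prod_one_add_mul_of_dvd_factorial {q M u : ℕ} (hu : u ∣ M.factorial)
    (hqu : q.Coprime u) : u ∣ ∏ i ∈ Finset.range M, (1 + q * (i + 1)) := by
  have : NeZero u := ⟨ne_zero_of_dvd_ne_zero M.factorial_ne_zero hu⟩
  obtain ⟨b, hb⟩ : ∃ b : ℕ, (q : ZMod u) * b = 1 :=
    ⟨(q : ZMod u)⁻¹.val, by rw [ZMod.natCast_zmod_val, ZMod.coe_mul_inv_eq_one q hqu]⟩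
  have hasc : u ∣ ∏ i ∈ Finset.range M, (b + 1 + i) := by
    rw [← Nat.ascFactorial_eq_prod_range]
    exact hu.trans (Nat.factorial_dvd_ascFactorial _ _)
  rw [← ZMod.natCast_eq_zero_iff] at hasc ⊢
  push_cast at hasc ⊢
  calc ∏ i ∈ Finset.range M, (1 + (q : ZMod u) * (i + 1))
      = ∏ i ∈ Finset.range M, ((q : ZMod u) * (b + 1 + i)) :=
        Finset.prod_congr rfl fun i _ => by linear_combination -hb
    _ = 0 := by rw [Finset.prod_mul_distrib, hasc, mul_zero]

lemma prod_one_add_mul_le {q : ℕ} (hq : q ≠ 0) (M : ℕ) :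
    ∏ i ∈ Finset.range M, (1 + q * (i + 1)) ≤ (2 * q) ^ M * M.factorial := by
  calc ∏ i ∈ Finset.range M, (1 + q * (i + 1))
      ≤ ∏ i ∈ Finset.range M, (2 * q * (i + 1)) := Finset.prod_le_prod' fun i _ => by
        have h1 : 1 ≤ q * (i + 1) := Nat.mul_pos (Nat.pos_of_ne_zero hq) i.succ_pos
        linarith
    _ = (2 * q) ^ M * M.factorial := by
      rw [Finset.prod_mul_distrib, Finset.prod_const, Finset.card_range,
        Finset.prod_range_add_one_eq_factorial]

lemma exists_coprime_mul_eq_factorial (q M : ℕ) :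
    ∃ e u : ℕ, e ∣ q ^ M ∧ q.Coprime u ∧ e * u = M.factorial := by
  obtain ⟨u, hu⟩ := Nat.gcd_dvd_left M.factorial (q ^ M)
  refine ⟨_, u, Nat.gcd_dvd_right _ _, Nat.coprime_of_dvd fun l hl hlq hlu => ?_, hu.symm⟩
  have hv : M.factorial.factorization l ≤ M := by
    have := Fact.mk hl
    rw [Nat.factorization_def _ hl]
    exact padicValNat_factorial_le (p := l) M
  have hdvd : l ^ M.factorial.factorization l ∣ M.factorial.gcd (q ^ M) :=
    Nat.dvd_gcd (Nat.ordProj_dvd _ _) ((pow_dvd_pow l hv).trans (pow_dvd_pow_of_dvd hlq M))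
  refine Nat.pow_succ_factorization_not_dvd M.factorial_ne_zero hl ?_
  rw [pow_succ]
  nth_rewrite 2 [hu]
  exact mul_dvd_mul hdvd hlu

lemma exists_mul_eq_prod_one_add_mul {q : ℕ} (hq : q ≠ 0) (M : ℕ) :
    ∃ u Q : ℕ, u ∣ M.factorial ∧ u * Q = ∏ i ∈ Finset.range M, (1 + q * (i + 1)) ∧
      Q ≤ (2 * q ^ 2) ^ M := by
  obtain ⟨e, u, heq, hqu, heu⟩ := exists_coprime_mul_eq_factorial q M
  have hu : u ∣ M.factorial := Dvd.intro_left e heu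
  obtain ⟨Q, hQ⟩ := dvd_prod_one_add_mul_of_dvd_factorial hu hqu
  have hu0 : 0 < u := Nat.pos_of_dvd_of_pos hu M.factorial_pos
  refine ⟨u, Q, hu, hQ.symm, Nat.le_of_mul_le_mul_left ?_ hu0⟩
  calc u * Q ≤ (2 * q) ^ M * (e * u) := by
        rw [← hQ, heu]
        exact prod_one_add_mul_le hq M
    _ ≤ (2 * q) ^ M * (q ^ M * u) := by
        gcongr
        exact Nat.le_of_dvd (by positivity) heq
    _ = u * (2 * q ^ 2) ^ M := by ring

/-- These primes divide the product of the `1 + q * i`, `1 ≤ i ≤ M`, and, being larger than `M`,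
still divide it after the part of `M !` coprime to `q` has been cancelled. -/
lemma sum_log_primesLE_filter_lt_le {q : ℕ} (hq : q ≠ 0) (M : ℕ) :
    ∑ p ∈ Nat.primesLE (q * M + 1) with M < p ∧ (p : ZMod q) = 1, Real.log p ≤
      M * (Real.log 2 + 2 * Real.log q) := by
  set s := {p ∈ Nat.primesLE (q * M + 1) | M < p ∧ (p : ZMod q) = 1}
  have hprime (p) (hp : p ∈ s) : p.Prime :=
    Nat.prime_of_mem_primesLE (Finset.mem_filter.1 hp).1
  obtain ⟨u, Q, hu, huQ, hQ⟩ := exists_mul_eq_prod_one_add_mul hq M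
  have hQ0 : Q ≠ 0 := by
    rintro rfl
    exact (Finset.prod_pos fun i _ => by positivity).ne huQ
  have hdvd : ∏ p ∈ s, p ∣ Q := by
    refine Finset.prod_primes_dvd _ (fun p hp => (hprime p hp).prime) fun p hp => ?_
    obtain ⟨hpn, hMp, hp1⟩ := Finset.mem_filter.1 hp
    obtain ⟨m, hm⟩ := (natCast_zmod_eq_one_iff_dvd_sub_one (hprime p hp).one_le).1 hp1
    have hp2 := (hprime p hp).two_le
    have hple := Nat.le_of_mem_primesLE hpn
    have hmM : m ≤ M := Nat.le_of_mul_le_mul_left (by omega) (Nat.pos_of_ne_zero hq)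
    obtain ⟨i, rfl⟩ : ∃ i, m = i + 1 :=
      Nat.exists_eq_succ_of_ne_zero (by rintro rfl; omega)
    have hpQ : p ∣ u * Q := by
      rw [huQ, show p = 1 + q * (i + 1) by omega]
      exact Finset.dvd_prod_of_mem (fun i => 1 + q * (i + 1)) (Finset.mem_range.2 hmM)
    refine ((hprime p hp).dvd_mul.1 hpQ).resolve_left fun hpu => ?_
    exact hMp.not_ge (((hprime p hp).dvd_factorial).1 (hpu.trans hu))
  have hprod : ∏ p ∈ s, (p : ℝ) ≤ (2 * (q : ℝ) ^ 2) ^ M := by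
    rw [← Nat.cast_prod]
    exact_mod_cast (Nat.le_of_dvd (Nat.pos_of_ne_zero hQ0) hdvd).trans hQ
  calc ∑ p ∈ s, Real.log p = Real.log (∏ p ∈ s, (p : ℝ)) :=
        (Real.log_prod fun p hp => by exact_mod_cast (hprime p hp).ne_zero).symm
    _ ≤ Real.log ((2 * (q : ℝ) ^ 2) ^ M) :=
        Real.log_le_log (Finset.prod_pos fun p hp => by exact_mod_cast (hprime p hp).pos) hprod
    _ = M * (Real.log 2 + 2 * Real.log q) := by
        rw [Real.log_pow, Real.log_mul two_ne_zero (by positivity), Real.log_pow, Nat.cast_ofNat]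

lemma sum_log_primesLE_le (n : ℕ) : ∑ p ∈ Nat.primesLE n, Real.log p ≤ n * (2 * Real.log 2) := by
  calc ∑ p ∈ Nat.primesLE n, Real.log p ≤ Real.log 4 * n := by
        rw [← Chebyshev.theta_eq_sum_primesLE_log]
        exact Chebyshev.theta_le_log4_mul_x n.cast_nonneg
    _ = n * (2 * Real.log 2) := by
        rw [show (4 : ℝ) = 2 ^ 2 by norm_num, Real.log_pow, Nat.cast_ofNat, mul_comm]

theorem thetaAP_one_le {q : ℕ} (hq : q ≠ 0) (n : ℕ) :
    thetaAP q 1 n ≤ n * ((3 * Real.log 2 + 2 * Real.log q) / q) := by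
  set M := n / q
  have hsmall : ∑ p ∈ Nat.primesLE n with ((p : ℕ) : ZMod q) = 1 ∧ ¬M < p, Real.log p ≤
      M * (2 * Real.log 2) := by
    calc _ ≤ ∑ p ∈ Nat.primesLE M, Real.log p := by
          refine Finset.sum_le_sum_of_subset_of_nonneg (fun p hp => ?_)
            fun p _ _ => Real.log_natCast_nonneg p
          simp only [Finset.mem_filter, Nat.mem_primesLE, not_lt] at hp ⊢
          exact ⟨hp.2.2, hp.1.2⟩
      _ ≤ M * (2 * Real.log 2) := sum_log_primesLE_le M
  have hlarge : ∑ p ∈ Nat.primesLE n with ((p : ℕ) : ZMod q) = 1 ∧ M < p, Real.log p ≤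
      M * (Real.log 2 + 2 * Real.log q) := by
    refine (Finset.sum_le_sum_of_subset_of_nonneg (fun p hp => ?_)
      fun p _ _ => Real.log_natCast_nonneg p).trans (sum_log_primesLE_filter_lt_le hq M)
    simp only [Finset.mem_filter, Nat.mem_primesLE] at hp ⊢
    obtain ⟨⟨hpn, hpp⟩, hp1, hMp⟩ := hp
    obtain ⟨m, hm⟩ := (natCast_zmod_eq_one_iff_dvd_sub_one hpp.one_le).1 hp1
    have hmM : m ≤ M :=
      (Nat.le_div_iff_mul_le (Nat.pos_of_ne_zero hq)).2 (by rw [mul_comm]; omega)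
    have := Nat.mul_le_mul_left q hmM
    exact ⟨⟨by omega, hpp⟩, hMp, hp1⟩
  have : 0 ≤ 3 * Real.log 2 + 2 * Real.log q :=
    add_nonneg (by positivity) (mul_nonneg zero_le_two (Real.log_natCast_nonneg q))
  calc thetaAP q 1 n ≤ M * (3 * Real.log 2 + 2 * Real.log q) := by
        rw [thetaAP, ← Finset.sum_filter_add_sum_filter_not _ (M < ·), Finset.filter_filter,
          Finset.filter_filter]
        linarith
    _ ≤ n / q * (3 * Real.log 2 + 2 * Real.log q) := by
        gcongr
        exact Nat.cast_div_le
    _ = n * ((3 * Real.log 2 + 2 * Real.log q) / q) := by ring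

end PrimesInProgressions

section ShiftedPrimes

open Filter Topology Asymptotics ArithmeticFunction ArithmeticFunction.Moebius

lemma summable_add_mul_log_div_sq (a b : ℝ) :
    Summable fun n : ℕ => (a + b * Real.log n) / (n : ℝ) ^ 2 := by
  have hlog : (fun n : ℕ => a + b * Real.log n) =O[atTop] fun n : ℕ => (n : ℝ) ^ (1 / 2 : ℝ) := by
    have hconst : (fun _ : ℝ => a) =o[atTop] fun x : ℝ => x ^ (1 / 2 : ℝ) :=
      isLittleO_const_left.2 (.inr (tendsto_norm_atTop_atTop.comp
        (tendsto_rpow_atTop (by norm_num))))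
    exact ((hconst.add ((isLittleO_log_rpow_atTop (by norm_num)).const_mul_left b)).comp_tendsto
      tendsto_natCast_atTop_atTop).isBigO
  refine summable_of_isBigO_nat (Real.summable_nat_rpow_inv.2 (by norm_num : 1 < (3 / 2 : ℝ))) ?_
  refine (hlog.mul (isBigO_refl (fun n : ℕ => ((n : ℝ) ^ 2)⁻¹) atTop)).congr'
    (.of_forall fun n => rfl) ?_
  filter_upwards [eventually_gt_atTop 0] with n hn
  have hn : (0 : ℝ) < n := by exact_mod_cast hn
  rw [← Real.rpow_natCast, ← Real.rpow_neg hn.le, ← Real.rpow_neg hn.le, ← Real.rpow_add hn]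
  norm_num

lemma hasSum_mul_thetaAP_one (g : ℕ → ℝ) (n : ℕ) :
    HasSum (fun d => g d * thetaAP d 1 n)
      (∑ p ∈ Nat.primesLE n, Real.log p * ∑ d ∈ (p - 1).divisors, g d) := by
  simp only [thetaAP, Finset.mul_sum, Finset.sum_filter]
  refine hasSum_sum fun p hp => ?_
  have hp2 := Nat.two_le_of_mem_primesLE hp
  have hmem (d : ℕ) : d ∈ (p - 1).divisors ↔ (p : ZMod d) = 1 := by
    rw [natCast_zmod_eq_one_iff_dvd_sub_one (by omega), Nat.mem_divisors]
    exact and_iff_left (by omega)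
  have hsum : ∑ d ∈ (p - 1).divisors, Real.log p * g d =
      ∑ d ∈ (p - 1).divisors, if (p : ZMod d) = 1 then g d * Real.log p else 0 :=
    Finset.sum_congr rfl fun d hd => by rw [if_pos ((hmem d).1 hd), mul_comm]
  simp only [mul_ite, mul_zero, hsum]
  exact hasSum_sum_of_ne_finset_zero fun d hd => if_neg (mt (hmem d).2 hd)

lemma abs_mul_thetaAP_one_div_le {g : ℕ → ℝ} {C : ℝ} (hg : ∀ d, |g d| ≤ C / d) (d n : ℕ) :
    |g d * (thetaAP d 1 n / n)| ≤ C * ((3 * Real.log 2 + 2 * Real.log d) / (d : ℝ) ^ 2) := by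
  rcases eq_or_ne d 0 with rfl | hd
  · have h0 : g 0 = 0 := by simpa using hg 0
    simp [h0]
  have hθ : 0 ≤ thetaAP d 1 n / n :=
    div_nonneg (Finset.sum_nonneg fun p _ => Real.log_natCast_nonneg p) n.cast_nonneg
  have := Real.log_natCast_nonneg d
  have hmean : thetaAP d 1 n / n ≤ (3 * Real.log 2 + 2 * Real.log d) / d :=
    div_le_of_le_mul₀ n.cast_nonneg (by positivity) ((thetaAP_one_le hd n).trans_eq (mul_comm _ _))
  rw [abs_mul, abs_of_nonneg hθ]
  calc |g d| * (thetaAP d 1 n / n)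
      ≤ C / d * ((3 * Real.log 2 + 2 * Real.log d) / d) :=
        mul_le_mul (hg d) hmean hθ ((abs_nonneg _).trans (hg d))
    _ = C * ((3 * Real.log 2 + 2 * Real.log d) / (d : ℝ) ^ 2) := by ring

lemma tendsto_mul_thetaAP_one_div {g : ℕ → ℝ} (hg : g 0 = 0) (d : ℕ) :
    Tendsto (fun n : ℕ => g d * (thetaAP d 1 n / n)) atTop (𝓝 (g d / d.totient)) := by
  rcases eq_or_ne d 0 with rfl | hd
  · simp [hg]
  · have := NeZero.mk hd
    exact (tendsto_thetaAP_div isUnit_one).const_mul (g d)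

theorem summable_div_totient {g : ℕ → ℝ} {C : ℝ} (hg : ∀ d, |g d| ≤ C / d) :
    Summable fun d => ‖g d / d.totient‖ := by
  refine .of_nonneg_of_le (fun d => norm_nonneg _) (fun d => ?_)
    ((summable_add_mul_log_div_sq (3 * Real.log 2) 2).mul_left C)
  exact le_of_tendsto (tendsto_mul_thetaAP_one_div (by simpa using hg 0) d).norm
    (.of_forall (abs_mul_thetaAP_one_div_le hg d))

theorem tendsto_sum_log_mul_sum_divisors_div {g : ℕ → ℝ} {C : ℝ} (hg : ∀ d, |g d| ≤ C / d) :
    Tendsto (fun n : ℕ =>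
      (∑ p ∈ Nat.primesLE n, Real.log p * ∑ d ∈ (p - 1).divisors, g d) / n) atTop
      (𝓝 (∑' d, g d / d.totient)) := by
  have hsum (n : ℕ) : (∑ p ∈ Nat.primesLE n, Real.log p * ∑ d ∈ (p - 1).divisors, g d) / n =
      ∑' d, g d * (thetaAP d 1 n / n) := by
    simp only [← mul_div_assoc]
    exact ((hasSum_mul_thetaAP_one g n).div_const _).tsum_eq.symm
  simp only [hsum]
  exact tendsto_tsum_of_dominated_convergence
    ((summable_add_mul_log_div_sq (3 * Real.log 2) 2).mul_left C)
    (tendsto_mul_thetaAP_one_div (by simpa using hg 0))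
    (.of_forall fun n d => abs_mul_thetaAP_one_div_le hg d n)

lemma totient_div_self_eq_sum_moebius_div (n : ℕ) :
    (n.totient : ℝ) / n = ∑ d ∈ n.divisors, (μ d : ℝ) / d := by
  rcases n.eq_zero_or_pos with rfl | hn
  · simp
  have hinv := sum_eq_iff_sum_mul_moebius_eq (R := ℝ) (f := fun n => n.totient) (g := fun n => n)
    |>.1 (fun n _ => by exact_mod_cast n.sum_totient) n hn
  rw [← hinv, Nat.sum_divisorsAntidiagonal (fun d e => (μ d : ℝ) * e), Finset.sum_div]
  refine Finset.sum_congr rfl fun d hd => ?_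
  rw [Nat.cast_div_charZero (Nat.dvd_of_mem_divisors hd)]
  field_simp

lemma abs_moebius_div_le (d : ℕ) : |(μ d : ℝ) / d| ≤ 1 / d := by
  rw [abs_div, Nat.abs_cast]
  gcongr
  exact_mod_cast abs_moebius_le_one

lemma tsum_moebius_prime_pow_div {p : ℕ} (hp : p.Prime) :
    ∑' e, (μ (p ^ e) : ℝ) / (p ^ e : ℕ) / (p ^ e : ℕ).totient = 1 - 1 / (p * ((p : ℝ) - 1)) := by
  have hp1 : (p : ℝ) - 1 ≠ 0 := sub_ne_zero.2 (by exact_mod_cast hp.ne_one)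
  rw [tsum_eq_sum (s := Finset.range 2) fun e he => ?_]
  · rw [Finset.sum_range_succ, Finset.sum_range_one, pow_zero, pow_one, moebius_apply_one,
      moebius_apply_prime hp, Nat.totient_one, Nat.totient_prime hp, Nat.cast_sub hp.one_le]
    push_cast
    field_simp
    ring
  · have he : 1 < e := by simpa using he
    rw [moebius_apply_prime_pow hp (by omega), if_neg (by omega), Int.cast_zero, zero_div, zero_div]

theorem artinConstant_eq_tsum : artinConstant = ∑' d : ℕ, (μ d : ℝ) / d / d.totient := by
  refine (tprod_congr fun p => (tsum_moebius_prime_pow_div p.2).symm).trans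
    (EulerProduct.eulerProduct_hasProd (f := fun d : ℕ => (μ d : ℝ) / d / d.totient) (by simp)
      (fun {m n} hmn => ?_) (summable_div_totient abs_moebius_div_le) (by simp)).tprod_eq
  rw [isMultiplicative_moebius.map_mul_of_coprime hmn, Nat.totient_mul hmn]
  push_cast
  ring

theorem tendsto_sum_log_mul_totient_div :
    Tendsto (fun n : ℕ => (∑ p ∈ Nat.primesLE n,
      Real.log p * ((p - 1).totient / ((p - 1 : ℕ) : ℝ))) / n) atTop (𝓝 artinConstant) := by
  simp only [totient_div_self_eq_sum_moebius_div, artinConstant_eq_tsum]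
  exact tendsto_sum_log_mul_sum_divisors_div abs_moebius_div_le

end ShiftedPrimes

section PartialSummation

open Filter Topology Asymptotics

variable {w a b : ℕ → ℝ}

lemma tendsto_natCast_mul_atTop (hw : Monotone w) (hpos : ∃ n, 0 < w n) :
    Tendsto (fun n : ℕ => n * w n) atTop atTop := by
  obtain ⟨m, hm⟩ := hpos
  refine tendsto_atTop_mono' _ ?_ (tendsto_natCast_atTop_atTop.atTop_mul_const hm)
  filter_upwards [eventually_ge_atTop m] with n hn
  gcongr
  exact hw hn

theorem isLittleO_sum_mul (hw : Monotone w) (hw0 : 0 ≤ w) (hpos : ∃ n, 0 < w n)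
    (ha : (fun n => ∑ i ∈ Finset.range (n + 1), a i) =o[atTop] fun n : ℕ => (n : ℝ)) :
    (fun n => ∑ i ∈ Finset.range (n + 1), w i * a i) =o[atTop] fun n : ℕ => n * w n := by
  set S := fun n => ∑ i ∈ Finset.range (n + 1), a i
  have hparts (n : ℕ) : ∑ i ∈ Finset.range (n + 1), w i * a i =
      S n * w n - ∑ i ∈ Finset.range n, S i * (w (i + 1) - w i) := by
    simpa [mul_comm] using Finset.sum_range_by_parts w a (n + 1)
  have htelescope (n : ℕ) :
      ∑ i ∈ Finset.range n, (((i + 1 : ℕ) : ℝ) * w (i + 1) - i * w i) = n * w n := by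
    simpa using Finset.sum_range_sub (fun i : ℕ => (i : ℝ) * w i) n
  have hΔ (i : ℕ) : 0 ≤ w (i + 1) - w i := sub_nonneg.2 (hw i.le_succ)
  have hle (i : ℕ) : i * (w (i + 1) - w i) ≤ ((i + 1 : ℕ) : ℝ) * w (i + 1) - i * w i := by
    have : 0 ≤ w (i + 1) := hw0 (i + 1)
    push_cast
    linarith
  have hnonneg (i : ℕ) : 0 ≤ i * (w (i + 1) - w i) := mul_nonneg i.cast_nonneg (hΔ i)
  have hsum := ((ha.mul_isBigO (isBigO_refl (fun i => w (i + 1) - w i) atTop)).trans_le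
    fun i => abs_le_abs_of_nonneg (hnonneg i) (hle i)).sum_range
      (fun i => (hnonneg i).trans (hle i))
      (by simpa only [htelescope] using tendsto_natCast_mul_atTop hw hpos)
  simp only [htelescope] at hsum
  simp only [hparts]
  exact (ha.mul_isBigO (isBigO_refl w atTop)).sub hsum

lemma isBigO_natCast_sum_sub_half {β : ℝ} (hβ : β ≠ 0)
    (hb : Tendsto (fun n : ℕ => (∑ i ∈ Finset.range (n + 1), b i) / n) atTop (𝓝 β)) :
    (fun n : ℕ => (n : ℝ)) =O[atTop] fun n : ℕ =>
      (∑ i ∈ Finset.range (n + 1), b i) - ∑ i ∈ Finset.range (n / 2 + 1), b i := by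
  set B := fun n => ∑ i ∈ Finset.range (n + 1), b i
  have hhalf : Tendsto (fun n : ℕ => (n / 2 : ℕ) / (n : ℝ)) atTop (𝓝 (1 / 2)) := by
    refine ((tendsto_nat_floor_mul_div_atTop (by norm_num : (0 : ℝ) ≤ 1 / 2)).comp
      tendsto_natCast_atTop_atTop).congr fun n => ?_
    rw [Function.comp_apply, one_div_mul_eq_div, ← Nat.cast_ofNat, Nat.floor_div_eq_div]
  have hdiff : Tendsto (fun n => (B n - B (n / 2)) / n) atTop (𝓝 (β / 2)) := by
    have := hb.sub ((hb.comp (Nat.tendsto_div_const_atTop two_ne_zero)).mul hhalf)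
    rw [mul_one_div, sub_half] at this
    refine this.congr' ?_
    filter_upwards [eventually_ge_atTop 2] with n hn
    have : ((n / 2 : ℕ) : ℝ) ≠ 0 := by exact_mod_cast (Nat.div_pos hn two_pos).ne'
    simp only [Function.comp_apply, B]
    field_simp
  have hβ2 : β / 2 ≠ 0 := div_ne_zero hβ two_ne_zero
  refine isBigO_of_div_tendsto_nhds ?_ (β / 2)⁻¹ ((hdiff.inv₀ hβ2).congr fun n => inv_div _ _)
  filter_upwards [hdiff.eventually_ne hβ2] with n hn h0
  exact absurd (by rw [h0, zero_div]) hn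

theorem isBigO_natCast_mul_sum_mul {β : ℝ} (hw : Monotone w) (hw0 : 0 ≤ w)
    (hdoubling : w =O[atTop] fun n => w (n / 2)) (hb0 : 0 ≤ b) (hβ : β ≠ 0)
    (hb : Tendsto (fun n : ℕ => (∑ i ∈ Finset.range (n + 1), b i) / n) atTop (𝓝 β)) :
    (fun n : ℕ => n * w n) =O[atTop] fun n => ∑ i ∈ Finset.range (n + 1), w i * b i := by
  refine ((isBigO_natCast_sum_sub_half hβ hb).mul hdoubling).trans
    (.of_bound' (.of_forall fun n => ?_))
  have hhalf : n / 2 + 1 ≤ n + 1 := Nat.succ_le_succ (Nat.div_le_self n 2)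
  rw [← Finset.sum_Ico_eq_sub b hhalf, Finset.sum_mul]
  refine abs_le_abs_of_nonneg (Finset.sum_nonneg fun i _ => mul_nonneg (hb0 i) (hw0 _)) ?_
  calc ∑ i ∈ Finset.Ico (n / 2 + 1) (n + 1), b i * w (n / 2)
      ≤ ∑ i ∈ Finset.Ico (n / 2 + 1) (n + 1), w i * b i := by
        refine Finset.sum_le_sum fun i hi => ?_
        rw [mul_comm]
        exact mul_le_mul_of_nonneg_right
          (hw (Nat.le_of_succ_le (Finset.mem_Ico.1 hi).1)) (hb0 i)
    _ ≤ ∑ i ∈ Finset.range (n + 1), w i * b i := by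
        rw [Finset.range_eq_Ico]
        exact Finset.sum_le_sum_of_subset_of_nonneg
          (Finset.Ico_subset_Ico_left (Nat.zero_le _)) fun i _ _ => mul_nonneg (hw0 i) (hb0 i)

theorem tendsto_sum_mul_div_sum_mul {α β : ℝ} (hw : Monotone w) (hw0 : 0 ≤ w)
    (hpos : ∃ n, 0 < w n) (hdoubling : w =O[atTop] fun n => w (n / 2)) (hb0 : 0 ≤ b) (hβ : β ≠ 0)
    (ha : Tendsto (fun n : ℕ => (∑ i ∈ Finset.range (n + 1), a i) / n) atTop (𝓝 α))
    (hb : Tendsto (fun n : ℕ => (∑ i ∈ Finset.range (n + 1), b i) / n) atTop (𝓝 β)) :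
    Tendsto (fun n => (∑ i ∈ Finset.range (n + 1), w i * a i) /
      ∑ i ∈ Finset.range (n + 1), w i * b i) atTop (𝓝 (α / β)) := by
  have hO := isBigO_natCast_mul_sum_mul hw hw0 hdoubling hb0 hβ hb
  have hcentered : (fun n => ∑ i ∈ Finset.range (n + 1), (a i - α / β * b i)) =o[atTop]
      fun n : ℕ => (n : ℝ) := by
    refine (isLittleO_iff_tendsto' ?_).2 ?_
    · filter_upwards [eventually_ne_atTop 0] with n hn h0
      exact absurd h0 (by exact_mod_cast hn)
    · have := ha.sub (hb.const_mul (α / β))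
      rw [div_mul_cancel₀ α hβ, sub_self] at this
      refine this.congr fun n => ?_
      rw [Finset.sum_sub_distrib, ← Finset.mul_sum]
      ring
  have hratio := ((isLittleO_sum_mul hw hw0 hpos hcentered).trans_isBigO hO).tendsto_div_nhds_zero
  have hne : ∀ᶠ n in atTop, ∑ i ∈ Finset.range (n + 1), w i * b i ≠ 0 := by
    filter_upwards [hO.eq_zero_imp, (tendsto_natCast_mul_atTop hw hpos).eventually_ne_atTop 0]
      with n h0 hn using mt h0 hn
  have := hratio.add_const (α / β)
  rw [zero_add] at this
  refine this.congr' ?_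
  filter_upwards [hne] with n hn
  rw [div_add' _ _ _ hn, Finset.mul_sum, ← Finset.sum_add_distrib]
  congr 1
  exact Finset.sum_congr rfl fun i _ => by ring

end PartialSummation

section PrimeSums

open Filter Topology Asymptotics

lemma monotoneOn_sub_one_div_log : MonotoneOn (fun x => (x - 1) / Real.log x) (Set.Ioi 1) := by
  intro x (hx : 1 < x) y (hy : 1 < y) hxy
  have hslope := strictConcaveOn_log_Ioi.concaveOn.neg.secant_mono (a := 1) (x := x) (y := y)
    (Set.mem_Ioi.2 one_pos) (Set.mem_Ioi.2 (one_pos.trans hx)) (Set.mem_Ioi.2 (one_pos.trans hy))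
    hx.ne' hy.ne' hxy
  simp only [Pi.neg_apply, Real.log_one, neg_zero, sub_zero, neg_div, neg_le_neg_iff] at hslope
  rw [div_le_div_iff₀ (sub_pos.2 hy) (sub_pos.2 hx)] at hslope
  simp only
  rw [div_le_div_iff₀ (Real.log_pos hx) (Real.log_pos hy)]
  linarith

/-- The weight `n ^ k * (n - 1) / log n`, which turns averages of `log p` over primes into averages
of `p ^ k * (p - 1)`. It vanishes at `n = 0` and `n = 1`, where the denominator is `0`. -/
noncomputable def powMulSubOneDivLog (k n : ℕ) : ℝ :=
  (n : ℝ) ^ k * (((n : ℝ) - 1) / Real.log n)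

lemma powMulSubOneDivLog_nonneg (k : ℕ) : 0 ≤ powMulSubOneDivLog k := by
  intro n
  rcases n.eq_zero_or_pos with rfl | hn
  · simp [powMulSubOneDivLog]
  · have : (1 : ℝ) ≤ n := by exact_mod_cast hn
    exact mul_nonneg (by positivity) (div_nonneg (by linarith) (Real.log_natCast_nonneg n))

lemma powMulSubOneDivLog_pos (k : ℕ) {n : ℕ} (hn : 1 < n) : 0 < powMulSubOneDivLog k n := by
  have hn : (1 : ℝ) < n := by exact_mod_cast hn
  exact mul_pos (by positivity) (div_pos (sub_pos.2 hn) (Real.log_pos hn))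

lemma powMulSubOneDivLog_monotone (k : ℕ) : Monotone (powMulSubOneDivLog k) := by
  intro m n hmn
  rcases lt_or_ge 1 m with hm | hm
  · have hm : (1 : ℝ) < m := by exact_mod_cast hm
    have hmn : (m : ℝ) ≤ n := by exact_mod_cast hmn
    exact mul_le_mul (pow_le_pow_left₀ m.cast_nonneg hmn k)
      (monotoneOn_sub_one_div_log hm (hm.trans_le hmn) hmn)
      (div_nonneg (by linarith) (Real.log_natCast_nonneg m)) (by positivity)
  · have hm0 : powMulSubOneDivLog k m = 0 := by interval_cases m <;> simp [powMulSubOneDivLog]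
    rw [hm0]
    exact powMulSubOneDivLog_nonneg k n

lemma powMulSubOneDivLog_isBigO_half (k : ℕ) :
    powMulSubOneDivLog k =O[atTop] fun n => powMulSubOneDivLog k (n / 2) := by
  refine .of_bound (3 ^ k * 4) ?_
  filter_upwards [eventually_ge_atTop 4] with n hn
  rw [Real.norm_of_nonneg (powMulSubOneDivLog_nonneg k _),
    Real.norm_of_nonneg (powMulSubOneDivLog_nonneg k _)]
  set m := n / 2
  have hm : (2 : ℝ) ≤ m := by exact_mod_cast (show 2 ≤ n / 2 by omega)
  have hmn : (m : ℝ) ≤ n := by exact_mod_cast Nat.div_le_self n 2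
  have hn3 : (n : ℝ) ≤ 2 * m + 1 := by exact_mod_cast (show n ≤ 2 * (n / 2) + 1 by omega)
  have hlog : 0 < Real.log m := Real.log_pos (by linarith)
  have hquot : 0 ≤ ((n : ℝ) - 1) / Real.log n :=
    div_nonneg (by linarith) (Real.log_natCast_nonneg n)
  calc powMulSubOneDivLog k n ≤ (3 * (m : ℝ)) ^ k * (4 * (m - 1) / Real.log m) := by
        unfold powMulSubOneDivLog
        gcongr <;> linarith
    _ = 3 ^ k * 4 * powMulSubOneDivLog k m := by
        rw [powMulSubOneDivLog, mul_pow]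
        ring

lemma powMulSubOneDivLog_mul_log (k : ℕ) {n : ℕ} (hn : 1 < n) :
    powMulSubOneDivLog k n * Real.log n = (n : ℝ) ^ k * (n - 1) := by
  have hlog : Real.log n ≠ 0 := (Real.log_pos (by exact_mod_cast hn)).ne'
  rw [powMulSubOneDivLog, mul_assoc, div_mul_cancel₀ _ hlog]

theorem tendsto_sum_log_primesLE_div :
    Tendsto (fun n : ℕ => (∑ p ∈ Nat.primesLE n, Real.log p) / n) atTop (𝓝 1) := by
  have hfilter (n : ℕ) : (Nat.primesLE n).filter (fun p : ℕ => (p : ZMod 1) = 1) =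
      Nat.primesLE n := Finset.filter_true_of_mem fun p _ => Subsingleton.elim _ _
  simpa [thetaAP, hfilter] using tendsto_thetaAP_div (q := 1) isUnit_one

theorem tendsto_sum_primesLE_pow_mul_div {f : ℕ → ℝ} {α : ℝ} (k : ℕ)
    (hf : Tendsto (fun n : ℕ => (∑ p ∈ Nat.primesLE n, Real.log p * f p) / n) atTop (𝓝 α)) :
    Tendsto (fun n => (∑ p ∈ Nat.primesLE n, (p : ℝ) ^ k * (p - 1) * f p) /
      ∑ p ∈ Nat.primesLE n, (p : ℝ) ^ k * (p - 1)) atTop (𝓝 α) := by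
  have hweight (p : ℕ) (hp : p.Prime) := powMulSubOneDivLog_mul_log k hp.one_lt
  have hlim := tendsto_sum_mul_div_sum_mul (powMulSubOneDivLog_monotone k)
    (powMulSubOneDivLog_nonneg k) ⟨2, powMulSubOneDivLog_pos k one_lt_two⟩
    (powMulSubOneDivLog_isBigO_half k) (a := fun p => if p.Prime then Real.log p * f p else 0)
    (b := fun p => if p.Prime then Real.log p else 0) (fun p => ?_) one_ne_zero
    (by simpa only [← Finset.sum_filter, Nat.primesLE_eq_filter_range] using hf)
    (by simpa only [← Finset.sum_filter, Nat.primesLE_eq_filter_range] using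
      tendsto_sum_log_primesLE_div)
  · rw [div_one] at hlim
    refine hlim.congr fun n => ?_
    simp only [mul_ite, mul_zero, ← Finset.sum_filter, ← mul_assoc, Nat.primesLE_eq_filter_range]
    congr 1 <;> refine Finset.sum_congr rfl fun p hp => ?_
    · rw [hweight p (Finset.mem_filter.1 hp).2]
    · rw [hweight p (Finset.mem_filter.1 hp).2]
  · simp only [Pi.zero_apply]
    split_ifs
    exacts [Real.log_natCast_nonneg p, le_rfl]

lemma sum_range_nth_prime {M : Type*} [AddCommMonoid M] (f : ℕ → M) (N : ℕ) :
    ∑ i ∈ Finset.range N, f (Nat.nth Nat.Prime i) =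
      ∑ p ∈ Nat.primesLE (Nat.nth Nat.Prime N - 1), f p := by
  rw [← Nat.primesBelow_eq_primesLE_sub_one, Nat.primesBelow_eq_filter_range]
  induction N with
  | zero =>
    have hempty : (Finset.range 2).filter Nat.Prime = ∅ := by decide
    rw [Nat.nth_prime_zero_eq_two, hempty]
    rfl
  | succ N ih =>
    rw [Finset.sum_range_succ, ih,
      Nat.filter_range_nth_eq_insert_of_infinite Nat.infinite_setOfPred_prime,
      Finset.sum_insert (by simp), add_comm]

end PrimeSums

/-- For every `k ≥ 0`, the ratio `(∑_{i=1}^N p_i^k φ(p_i - 1)) / (∑_{i=1}^N p_i^k (p_i - 1))`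
over the first `N` primes tends to Artin's constant. -/
theorem artin_ratio_formula_weighted (k : ℕ) :
    Tendsto (fun N : ℕ =>
        (∑ i ∈ Finset.range N,
          (Nat.nth Nat.Prime i : ℝ) ^ k * ((Nat.nth Nat.Prime i - 1).totient : ℝ)) /
        (∑ i ∈ Finset.range N,
          (Nat.nth Nat.Prime i : ℝ) ^ k * ((Nat.nth Nat.Prime i : ℝ) - 1)))
      atTop (nhds artinConstant) := by
  have hnth : Tendsto (fun N => Nat.nth Nat.Prime N - 1) atTop atTop :=
    (tendsto_sub_atTop_nat 1).comp
      (Nat.nth_strictMono Nat.infinite_setOfPred_prime).tendsto_atTop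
  refine ((tendsto_sum_primesLE_pow_mul_div k tendsto_sum_log_mul_totient_div).comp hnth).congr
    fun N => ?_
  rw [Function.comp_apply, sum_range_nth_prime fun p => (p : ℝ) ^ k * ((p - 1).totient : ℝ),
    sum_range_nth_prime fun p => (p : ℝ) ^ k * ((p : ℝ) - 1)]
  congr 1
  refine Finset.sum_congr rfl fun p hp => ?_
  have hp1 : (p : ℝ) - 1 ≠ 0 :=
    sub_ne_zero.2 (by exact_mod_cast (Nat.prime_of_mem_primesLE hp).ne_one)
  rw [Nat.cast_pred (Nat.prime_of_mem_primesLE hp).pos, mul_assoc, mul_div_cancel₀ _ hp1]
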